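/- For every integer n ≥ 1, the function 𝒫_n(z) = ψ_{2n}(z;N) + (1 + a_{2n−1}(N))·ψ_{2n−1}(z;N) (the sieved Jacobi polynomial of the first kind in the variable x = z + 1/z) satisfies, for all z ∈ ℂ with z ≠ 0 and z^{2N} ≠ 1, the eigenvalue equation (L(N)(L(N)𝒫_n))(z) − N(α+β+1)·(L(N)𝒫_n)(z) = n·(n + N(α+β+1))·𝒫_n(z). -/

import Mathlib

open Finset

/-- Monic OPUC associated to a sequence of (real) Verblunsky parameters. -/
noncomputable def Phi (c : ℕ → ℝ) : ℕ → ℂ → ℂ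
  | 0, _ => 1
  | n + 1, z => z * Phi c n z - (c n : ℂ) * z ^ n * Phi c n z⁻¹

/-- CMV Laurent polynomials: ψ_{2m} z = z^m Φ_{2m}(1/z), ψ_{2m+1} z = z^{-m} Φ_{2m+1}(z). -/
noncomputable def psi (c : ℕ → ℝ) (n : ℕ) (z : ℂ) : ℂ :=
  if Even n then z ^ (n / 2) * Phi c n z⁻¹
  else z ^ (-((n / 2 : ℕ) : ℤ)) * Phi c n z

/-- Verblunsky parameters of the Jacobi OPUC. -/
noncomputable def jacobiA (α β : ℝ) (n : ℕ) : ℝ :=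
  -(α + 1 / 2 + (-1 : ℝ) ^ (n + 1) * (β + 1 / 2)) / (n + α + β + 2)

/-- Sieved Verblunsky parameters: a_n(N) = a_{k-1} if n = N k - 1 (k ≥ 1), 0 otherwise. -/
noncomputable def sievedA (α β : ℝ) (N n : ℕ) : ℝ :=
  if N ∣ (n + 1) then jacobiA α β ((n + 1) / N - 1) else 0

/-- The primitive N-th root of unity q = exp(2πi/N). -/
noncomputable def qN (N : ℕ) : ℂ := Complex.exp (2 * Real.pi * Complex.I / N)

/-- The coefficients A_k(z;N) of the Dunkl-type operator L(N). -/
noncomputable def Acoef (α β : ℝ) (N k : ℕ) (z : ℂ) : ℂ :=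
  if Even N then
    ((α : ℂ) + β + 1 + (-1 : ℂ) ^ k * ((α : ℂ) - β)) * z ^ 2 / (qN N ^ k - z ^ 2)
  else
    (((α : ℂ) + β + 1) * z ^ 2 +
        (if Even k then qN N ^ ((k : ℤ) / 2) else qN N ^ (((k : ℤ) - (N : ℤ)) / 2)) *
          ((α : ℂ) - β) * z) /
      (qN N ^ k - z ^ 2)

/-- B(z) = N((α+β+1) z^{2N} + (α-β) z^N)/(z^{2N} - 1). -/
noncomputable def Bfun (α β : ℝ) (N : ℕ) (z : ℂ) : ℂ :=
  (N : ℂ) * (((α : ℂ) + β + 1) * z ^ (2 * N) + ((α : ℂ) - β) * z ^ N) / (z ^ (2 * N) - 1)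

/-- The Dunkl-type operator L(N). -/
noncomputable def Lop (α β : ℝ) (N : ℕ) (f : ℂ → ℂ) : ℂ → ℂ := fun z =>
  z * deriv f z + ∑ k ∈ Finset.range N, Acoef α β N k z * (f (qN N ^ k / z) - f z)

/-- A function ℂ∖{0} → ℂ is a Laurent polynomial. -/
def IsLaurentPoly (f : ℂ → ℂ) : Prop :=
  ∃ (m : ℕ) (p : Polynomial ℂ), ∀ z : ℂ, z ≠ 0 → f z = Polynomial.eval z p / z ^ m

/-- Sieved Jacobi polynomial of the first kind, as a function of z (x = z + 1/z). -/
noncomputable def sievP (α β : ℝ) (N n : ℕ) (z : ℂ) : ℂ :=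
  psi (sievedA α β N) (2 * n) z
    + (1 + (sievedA α β N (2 * n - 1) : ℂ)) * psi (sievedA α β N) (2 * n - 1) z

/-- χ_n(z) = (z - 1/z) Q_{n-1}(x(z)), with Q the sieved Jacobi polynomial of 2nd kind. -/
noncomputable def sievChi (α β : ℝ) (N n : ℕ) (z : ℂ) : ℂ :=
  -psi (sievedA α β N) (2 * n) z
    + (1 - (sievedA α β N (2 * n - 1) : ℂ)) * psi (sievedA α β N) (2 * n - 1) z

/-!
With `y` running over the `2N`-th roots of unity and weights `w(y)` alternating between `α + 1/2`
and `β + 1/2`, the operator takes, for even and odd `N` alike, the form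
`(L f)(z) = z f'(z) + ∑ w(y) z / (y - z) (f(y² / z) - f(z))`.
Since `z / (y - z) + z⁻¹ / (y⁻¹ - z⁻¹) = -1`, it anticommutes with the two reflections
`f(z) ↦ f(1/z)` and `f(z) ↦ z f(1/z)` up to a multiple of the reflection and a multiple of `f`,
as long as `f` is homogeneous under multiplication by `N`-th roots of unity. The CMV recursion
builds each `ψ` from the previous one by such a reflection minus `a` times `ψ`, and the Jacobi
parameters are exactly those for which the two terms proportional to `ψ` cancel. So every `ψ` is an
eigenfunction of `L`; those in `𝒫_n` have eigenvalues `-n` and `n + N(α + β + 1)`, the roots of the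
quadratic equation to be proved.
-/

section RootsOfUnity

variable {N : ℕ}

lemma qN_ne_zero (N : ℕ) : qN N ≠ 0 := Complex.exp_ne_zero _

lemma isPrimitiveRoot_qN (hN : N ≠ 0) : IsPrimitiveRoot (qN N) N :=
  Complex.isPrimitiveRoot_exp N hN

lemma qN_two_mul_sq (N : ℕ) : qN (2 * N) ^ 2 = qN N := by
  rw [qN, qN, ← Complex.exp_nat_mul]
  congr 1
  push_cast
  ring

lemma qN_two_mul_pow_self (hN : N ≠ 0) : qN (2 * N) ^ N = -1 :=
  ((isPrimitiveRoot_qN (by positivity)).pow (by positivity) (mul_comm 2 N)).eq_neg_one_of_two_right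

lemma qN_pow_pow_self (hN : N ≠ 0) (k : ℕ) : (qN N ^ k) ^ N = 1 := by
  rw [pow_right_comm, (isPrimitiveRoot_qN hN).pow_eq_one, one_pow]

lemma qN_two_mul_pow_sq (N j : ℕ) : (qN (2 * N) ^ j) ^ 2 = qN N ^ j := by
  rw [pow_right_comm, qN_two_mul_sq]

lemma sum_range_two_mul {M : Type*} [AddCommMonoid M] (F : ℕ → M) (m : ℕ) :
    ∑ j ∈ range (2 * m), F j = ∑ i ∈ range m, (F (2 * i) + F (2 * i + 1)) := by
  induction m with
  | zero => rfl
  | succ m ih => rw [mul_add_one, sum_range_succ, sum_range_succ, sum_range_succ, ih, add_assoc]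

lemma sum_range_sub_of_eq {M : Type*} [AddCommMonoid M] (F : ℕ → M) {m : ℕ} (hF : F m = F 0) :
    ∑ j ∈ range m, F (m - j) = ∑ j ∈ range m, F j := by
  cases m with
  | zero => rfl
  | succ m =>
    rw [← sum_range_reflect, sum_range_succ, sum_range_succ' F, Nat.add_sub_cancel]
    congr 1
    · refine sum_congr rfl fun j hj => congrArg F ?_
      have := mem_range.1 hj
      omega
    · simpa using hF

end RootsOfUnity

section PowerSums

variable {α β : ℝ} {N : ℕ}

/-- The weight `w(y)` attached to the `2N`-th root of unity `y = exp(πij/N)`: these weights play the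
role of the exponents of the Jacobi weight `|1 - z|^(2α+1) |1 + z|^(2β+1)` at `±1`. -/
noncomputable def jacobiWeight (α β : ℝ) (j : ℕ) : ℂ := if Even j then α + 1 / 2 else β + 1 / 2

lemma jacobiWeight_eq (α β : ℝ) (j : ℕ) :
    jacobiWeight α β j = (α + β + 1 + (-1) ^ j * (α - β)) / 2 := by
  rcases Nat.even_or_odd j with hj | hj
  · rw [jacobiWeight, if_pos hj, hj.neg_one_pow]
    ring
  · rw [jacobiWeight, if_neg (Nat.not_even_iff_odd.2 hj), hj.neg_one_pow]
    ring

/-- The weighted power sum `∑ w(y) y^d` over the `2N`-th roots of unity `y = exp(πij/N)`. -/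
noncomputable def weightedPowerSum (α β : ℝ) (N : ℕ) (d : ℤ) : ℂ :=
  ∑ j ∈ range (2 * N), jacobiWeight α β j * (qN (2 * N) ^ j) ^ d

lemma sum_jacobiWeight_mul_inv (hN : N ≠ 0) (F : ℂ → ℂ) :
    ∑ j ∈ range (2 * N), jacobiWeight α β j * F (qN (2 * N) ^ j)⁻¹ =
      ∑ j ∈ range (2 * N), jacobiWeight α β j * F (qN (2 * N) ^ j) := by
  have hq := (isPrimitiveRoot_qN (N := 2 * N) (by positivity)).pow_eq_one
  rw [← sum_range_sub_of_eq (fun j => jacobiWeight α β j * F (qN (2 * N) ^ j))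
    (by simp [jacobiWeight, hq])]
  refine sum_congr rfl fun j hj => ?_
  have hj : j ≤ 2 * N := (mem_range.1 hj).le
  rw [pow_sub₀ _ (qN_ne_zero _) hj, hq, one_mul]
  simp [jacobiWeight, Nat.even_sub hj]

lemma weightedPowerSum_neg (hN : N ≠ 0) (d : ℤ) :
    weightedPowerSum α β N (-d) = weightedPowerSum α β N d := by
  simpa only [inv_zpow', weightedPowerSum] using
    sum_jacobiWeight_mul_inv (α := α) (β := β) hN (fun y => y ^ d)

lemma weightedPowerSum_eq (α β : ℝ) (N : ℕ) (d : ℤ) :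
    weightedPowerSum α β N d =
      (α + 1 / 2 + qN (2 * N) ^ d * (β + 1 / 2)) * ∑ i ∈ range N, (qN N ^ d) ^ i := by
  rw [weightedPowerSum, sum_range_two_mul, mul_sum]
  refine sum_congr rfl fun i _ => ?_
  have h_even : (qN (2 * N) ^ (2 * i)) ^ d = (qN N ^ d) ^ i := by
    rw [pow_mul, qN_two_mul_sq, ← zpow_natCast, ← zpow_natCast, zpow_comm]
  have h_odd : (qN (2 * N) ^ (2 * i + 1)) ^ d = qN (2 * N) ^ d * (qN N ^ d) ^ i := by
    rw [pow_succ, mul_zpow, h_even, mul_comm]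
  rw [h_even, h_odd, jacobiWeight, jacobiWeight, if_pos (even_two_mul i),
    if_neg (Nat.not_even_two_mul_add_one i)]
  ring

lemma weightedPowerSum_of_not_dvd (hN : N ≠ 0) {d : ℤ} (hd : ¬(N : ℤ) ∣ d) :
    weightedPowerSum α β N d = 0 := by
  have hq := isPrimitiveRoot_qN hN
  have hd1 : qN N ^ d ≠ 1 := mt (hq.zpow_eq_one_iff_dvd d).1 hd
  have hdN : (qN N ^ d) ^ N = 1 := by
    rw [← zpow_natCast, zpow_comm, zpow_natCast, hq.pow_eq_one, one_zpow]
  rw [weightedPowerSum_eq, geom_sum_eq hd1, hdN, sub_self, zero_div, mul_zero]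

lemma weightedPowerSum_mul (hN : N ≠ 0) (k : ℤ) :
    weightedPowerSum α β N (N * k) = N * (α + 1 / 2 + (-1) ^ k * (β + 1 / 2)) := by
  rw [weightedPowerSum_eq, zpow_mul, zpow_natCast, qN_two_mul_pow_self hN, zpow_mul, zpow_natCast,
    (isPrimitiveRoot_qN hN).pow_eq_one]
  simp [mul_comm]

lemma weightedPowerSum_zero (hN : N ≠ 0) : weightedPowerSum α β N 0 = N * (α + β + 1) := by
  have h := weightedPowerSum_mul (α := α) (β := β) hN 0
  rw [mul_zero, zpow_zero] at h
  rw [h]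
  ring

end PowerSums

section Verblunsky

variable {α β : ℝ} {N : ℕ}

lemma sievedA_of_not_dvd {n : ℕ} (h : ¬N ∣ n + 1) : sievedA α β N n = 0 := if_neg h

lemma sievedA_of_eq_mul (hN : N ≠ 0) {n k : ℕ} (h : n + 1 = N * (k + 1)) :
    sievedA α β N n = jacobiA α β k := by
  rw [sievedA, h, if_pos (dvd_mul_right N _), Nat.mul_div_cancel_left _ (by positivity),
    Nat.add_sub_cancel]

theorem sievedA_mul (hN : N ≠ 0) (hαβ : ∀ k : ℕ, (k : ℝ) + α + β + 2 ≠ 0) (n : ℕ) :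
    (sievedA α β N n : ℂ) * (n + 1 + N * (α + β + 1)) = -weightedPowerSum α β N (n + 1) := by
  by_cases h : N ∣ n + 1
  · obtain ⟨k, hk⟩ := Nat.exists_eq_add_one_of_ne_zero (n := (n + 1) / N)
      (Nat.div_pos (Nat.le_of_dvd n.succ_pos h) (by positivity)).ne'
    have hn : n + 1 = N * (k + 1) := by rw [← hk, Nat.mul_div_cancel' h]
    have hnℤ : (n + 1 : ℤ) = N * (k + 1 : ℕ) := by exact_mod_cast hn
    have hnℂ : (n + 1 : ℂ) = N * (k + 1) := by exact_mod_cast hn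
    have hden : (k + α + β + 2 : ℂ) ≠ 0 := by exact_mod_cast hαβ k
    rw [sievedA_of_eq_mul hN hn, hnℤ, weightedPowerSum_mul hN, zpow_natCast, hnℂ, jacobiA]
    push_cast
    field_simp
    ring
  · rw [sievedA_of_not_dvd h, weightedPowerSum_of_not_dvd hN (by exact_mod_cast h)]
    simp

end Verblunsky

section RegularDomain

variable {N : ℕ} {z : ℂ}

/-- The open set on which no coefficient of `Lop` has a pole; it is stable under every reflection
`z ↦ q^k / z`. -/
def regularDomain (N : ℕ) : Set ℂ := {z | z ≠ 0 ∧ z ^ (2 * N) ≠ 1}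

lemma isOpen_regularDomain (N : ℕ) : IsOpen (regularDomain N) :=
  isOpen_ne.inter (isOpen_ne_fun (continuous_pow _) continuous_const)

lemma ne_zero_of_mem_regularDomain (hz : z ∈ regularDomain N) : N ≠ 0 := by
  rintro rfl
  exact hz.2 (pow_zero z)

lemma div_mem_regularDomain (hz : z ∈ regularDomain N) {ζ : ℂ} (hζ : ζ ^ N = 1) :
    ζ / z ∈ regularDomain N := by
  have hζ0 := (IsUnit.of_pow_eq_one hζ (ne_zero_of_mem_regularDomain hz)).ne_zero
  refine ⟨div_ne_zero hζ0 hz.1, ?_⟩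
  rw [div_pow, mul_comm, pow_mul ζ, hζ, one_pow, one_div, mul_comm, ne_eq, inv_eq_one]
  exact hz.2

lemma inv_mem_regularDomain (hz : z ∈ regularDomain N) : z⁻¹ ∈ regularDomain N := by
  simpa using div_mem_regularDomain hz (one_pow N)

lemma qN_two_mul_pow_sub_ne_zero (hz : z ∈ regularDomain N) (j : ℕ) :
    qN (2 * N) ^ j - z ≠ 0 := by
  have hN := ne_zero_of_mem_regularDomain hz
  intro h
  exact hz.2 (sub_eq_zero.1 h ▸ qN_pow_pow_self (by positivity) j)

end RegularDomain

section Kernel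

variable {α β : ℝ} {N : ℕ} {z : ℂ}

lemma sievedPhase_eq (hN : Odd N) (k : ℕ) :
    (if Even k then qN N ^ ((k : ℤ) / 2) else qN N ^ (((k : ℤ) - (N : ℤ)) / 2)) =
      (-1) ^ k * qN (2 * N) ^ k := by
  have hsq (r : ℤ) : qN N ^ r = qN (2 * N) ^ (2 * r) := by
    rw [zpow_mul, zpow_ofNat, qN_two_mul_sq]
  split_ifs with hk
  · rw [hsq, show 2 * ((k : ℤ) / 2) = k by have := hk.two_dvd; omega, zpow_natCast,
      hk.neg_one_pow, one_mul]
  · rw [Nat.not_even_iff_odd] at hk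
    have h_exponent : 2 * (((k : ℤ) - N) / 2) = k - N := by
      obtain ⟨r, rfl⟩ := hk
      obtain ⟨m, rfl⟩ := hN
      omega
    rw [hsq, h_exponent, zpow_sub₀ (qN_ne_zero _), zpow_natCast, zpow_natCast,
      qN_two_mul_pow_self hN.pos.ne', hk.neg_one_pow, div_neg, div_one, neg_one_mul]

theorem Acoef_eq_add (hz : z ∈ regularDomain N) (k : ℕ) :
    Acoef α β N k z = jacobiWeight α β k * (z / (qN (2 * N) ^ k - z)) +
      jacobiWeight α β (N + k) * (z / (qN (2 * N) ^ (N + k) - z)) := by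
  have hy := qN_two_mul_pow_sub_ne_zero hz k
  have hy' := qN_two_mul_pow_sub_ne_zero hz (N + k)
  rw [pow_add, qN_two_mul_pow_self (ne_zero_of_mem_regularDomain hz), neg_one_mul] at hy' ⊢
  have hden : (qN (2 * N) ^ k) ^ 2 - z ^ 2 ≠ 0 := by
    rw [show (qN (2 * N) ^ k) ^ 2 - z ^ 2 =
      -((qN (2 * N) ^ k - z) * (-qN (2 * N) ^ k - z)) by ring]
    exact neg_ne_zero.2 (mul_ne_zero hy hy')
  rw [Acoef, ← qN_two_mul_pow_sq N k, jacobiWeight_eq, jacobiWeight_eq, pow_add (-1 : ℂ)]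
  rcases Nat.even_or_odd N with hN | hN
  · rw [if_pos hN, hN.neg_one_pow]
    field_simp
    ring
  · rw [if_neg (Nat.not_even_iff_odd.2 hN), sievedPhase_eq hN, hN.neg_one_pow]
    field_simp
    ring

theorem Lop_eq_sum_two_mul (f : ℂ → ℂ) (hz : z ∈ regularDomain N) :
    Lop α β N f z = z * deriv f z + ∑ j ∈ range (2 * N),
      jacobiWeight α β j * (z / (qN (2 * N) ^ j - z)) * (f (qN N ^ j / z) - f z) := by
  have hq := (isPrimitiveRoot_qN (ne_zero_of_mem_regularDomain hz)).pow_eq_one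
  rw [Lop, two_mul N, sum_range_add, ← sum_add_distrib]
  congr 1
  refine sum_congr rfl fun k _ => ?_
  rw [Acoef_eq_add hz, add_mul, ← two_mul N, pow_add (qN N), hq, one_mul]

/-- The coefficient of `f(1/z)` in `(L f)(z)` when `f` is homogeneous of weight `e`. -/
noncomputable def dunklKernel (α β : ℝ) (N : ℕ) (e : ℤ) (z : ℂ) : ℂ :=
  ∑ j ∈ range (2 * N), jacobiWeight α β j * ((qN N ^ j) ^ e * (z / (qN (2 * N) ^ j - z)))

lemma dunklKernel_inv (hz : z ∈ regularDomain N) (e : ℤ) :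
    dunklKernel α β N e z⁻¹ = -∑ j ∈ range (2 * N),
      jacobiWeight α β j * ((qN N ^ j) ^ (-e) * (qN (2 * N) ^ j / (qN (2 * N) ^ j - z))) := by
  have hN := ne_zero_of_mem_regularDomain hz
  simp only [dunklKernel, ← qN_two_mul_pow_sq N]
  rw [← sum_jacobiWeight_mul_inv hN (fun y => (y ^ 2) ^ e * (z⁻¹ / (y - z⁻¹))), ← sum_neg_distrib]
  refine sum_congr rfl fun j _ => ?_
  have hy : qN (2 * N) ^ j ≠ 0 := pow_ne_zero j (qN_ne_zero _)
  have hyz := qN_two_mul_pow_sub_ne_zero hz j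
  have hzy : z - qN (2 * N) ^ j ≠ 0 := sub_ne_zero.2 (sub_ne_zero.1 hyz).symm
  generalize qN (2 * N) ^ j = y at *
  have hz0 := hz.1
  have hreflect : z⁻¹ / (y⁻¹ - z⁻¹) = -(y / (y - z)) := by
    rw [inv_sub_inv hy hz0]
    field_simp
    ring
  rw [hreflect, inv_pow, inv_zpow']
  ring

lemma dunklKernel_neg_add_inv (hz : z ∈ regularDomain N) (e : ℤ) :
    dunklKernel α β N (-e) z + dunklKernel α β N e z⁻¹ = -weightedPowerSum α β N (2 * e) := by
  rw [← weightedPowerSum_neg (ne_zero_of_mem_regularDomain hz), dunklKernel_inv hz, dunklKernel,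
    weightedPowerSum, ← sub_eq_add_neg, ← sum_sub_distrib, ← sum_neg_distrib]
  refine sum_congr rfl fun j _ => ?_
  have hyz := qN_two_mul_pow_sub_ne_zero hz j
  rw [← qN_two_mul_pow_sq, ← mul_neg (2 : ℤ), zpow_mul, zpow_ofNat]
  field_simp
  ring

lemma dunklKernel_one_sub_add_inv (hz : z ∈ regularDomain N) (e : ℤ) :
    dunklKernel α β N (1 - e) z + z ^ 2 * dunklKernel α β N e z⁻¹ =
      z * weightedPowerSum α β N (1 - 2 * e) := by
  rw [dunklKernel_inv hz, dunklKernel, weightedPowerSum, mul_neg, mul_sum, mul_sum,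
    ← sub_eq_add_neg, ← sum_sub_distrib]
  refine sum_congr rfl fun j _ => ?_
  have hy : qN (2 * N) ^ j ≠ 0 := pow_ne_zero j (qN_ne_zero _)
  have hyz := qN_two_mul_pow_sub_ne_zero hz j
  rw [← qN_two_mul_pow_sq, sub_eq_add_neg 1 e, zpow_one_add₀ (pow_ne_zero 2 hy),
    sub_eq_add_neg 1 (2 * e), zpow_one_add₀ hy, ← mul_neg (2 : ℤ), zpow_mul, zpow_ofNat]
  field_simp

end Kernel

section RotationCovariant

variable {N : ℕ} {e : ℤ} {f : ℂ → ℂ}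

/-- `f` is homogeneous of weight `e` under multiplication by `N`-th roots of unity. -/
def RotationCovariant (N : ℕ) (e : ℤ) (f : ℂ → ℂ) : Prop :=
  ∀ ζ : ℂ, ζ ^ N = 1 → ∀ z, f (ζ * z) = ζ ^ e * f z

lemma RotationCovariant.comp_inv (hf : RotationCovariant N e f) :
    RotationCovariant N (-e) fun w => f w⁻¹ := by
  intro ζ hζ z
  dsimp only
  rw [mul_inv, hf ζ⁻¹ (by rw [inv_pow, hζ, inv_one]), inv_zpow']

lemma RotationCovariant.mul_comp_inv (hN : N ≠ 0) (hf : RotationCovariant N e f) :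
    RotationCovariant N (1 - e) fun w => w * f w⁻¹ := by
  intro ζ hζ z
  have h := hf.comp_inv ζ hζ z
  dsimp only at h ⊢
  rw [h, sub_eq_add_neg, zpow_one_add₀ (IsUnit.of_pow_eq_one hζ hN).ne_zero]
  ring

end RotationCovariant

section Reflections

variable {α β : ℝ} {N : ℕ} {e : ℤ} {f : ℂ → ℂ} {z : ℂ}

theorem RotationCovariant.Lop_eq (hf : RotationCovariant N e f) (hz : z ∈ regularDomain N) :
    Lop α β N f z =
      z * deriv f z + dunklKernel α β N e z * f z⁻¹ - dunklKernel α β N 0 z * f z := by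
  have hN := ne_zero_of_mem_regularDomain hz
  simp only [Lop_eq_sum_two_mul f hz, div_eq_mul_inv (qN N ^ _) z,
    hf _ (qN_pow_pow_self hN _), dunklKernel, sum_mul, add_sub_assoc, ← sum_sub_distrib]
  congr 1
  refine sum_congr rfl fun j _ => ?_
  rw [zpow_zero]
  ring

lemma dunklKernel_zero_add_inv (hz : z ∈ regularDomain N) :
    dunklKernel α β N 0 z + dunklKernel α β N 0 z⁻¹ = -(N * (α + β + 1)) := by
  simpa [weightedPowerSum_zero (ne_zero_of_mem_regularDomain hz)] using
    dunklKernel_neg_add_inv (α := α) (β := β) hz 0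

lemma hasDerivAt_comp_inv (hz : z ≠ 0) (hf : DifferentiableAt ℂ f z⁻¹) :
    HasDerivAt (fun w => f w⁻¹) (deriv f z⁻¹ * -(z ^ 2)⁻¹) z :=
  hf.hasDerivAt.comp z (hasDerivAt_inv hz)

theorem Lop_comp_inv (hf : RotationCovariant N e f) (hz : z ∈ regularDomain N)
    (hd : DifferentiableAt ℂ f z⁻¹) :
    Lop α β N (fun w => f w⁻¹) z + Lop α β N f z⁻¹ =
      N * (α + β + 1) * f z⁻¹ - weightedPowerSum α β N (2 * e) * f z := by
  have hz0 := hz.1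
  rw [hf.comp_inv.Lop_eq hz, hf.Lop_eq (inv_mem_regularDomain hz),
    (hasDerivAt_comp_inv hz0 hd).deriv, inv_inv]
  have h_deriv : z * (deriv f z⁻¹ * -(z ^ 2)⁻¹) + z⁻¹ * deriv f z⁻¹ = 0 := by
    field_simp
    ring
  linear_combination h_deriv + f z * dunklKernel_neg_add_inv (α := α) (β := β) hz e -
    f z⁻¹ * dunklKernel_zero_add_inv (α := α) (β := β) hz

theorem Lop_mul_comp_inv (hf : RotationCovariant N e f) (hz : z ∈ regularDomain N)
    (hd : DifferentiableAt ℂ f z⁻¹) :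
    Lop α β N (fun w => w * f w⁻¹) z + z * Lop α β N f z⁻¹ =
      (1 + N * (α + β + 1)) * (z * f z⁻¹) + weightedPowerSum α β N (1 - 2 * e) * f z := by
  have hz0 := hz.1
  have hderiv : HasDerivAt (fun w => w * f w⁻¹) (1 * f z⁻¹ + z * (deriv f z⁻¹ * -(z ^ 2)⁻¹)) z :=
    (hasDerivAt_id z).mul (hasDerivAt_comp_inv hz0 hd)
  rw [(hf.mul_comp_inv (ne_zero_of_mem_regularDomain hz)).Lop_eq hz,
    hf.Lop_eq (inv_mem_regularDomain hz), hderiv.deriv, inv_inv]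
  have h_deriv : z * (z * (deriv f z⁻¹ * -(z ^ 2)⁻¹)) + z * (z⁻¹ * deriv f z⁻¹) = 0 := by
    field_simp
    ring
  have h_kernel : dunklKernel α β N (1 - e) z * z⁻¹ + z * dunklKernel α β N e z⁻¹ =
      weightedPowerSum α β N (1 - 2 * e) := by
    linear_combination z⁻¹ * dunklKernel_one_sub_add_inv (α := α) (β := β) hz e -
      (z * dunklKernel α β N e z⁻¹ - weightedPowerSum α β N (1 - 2 * e)) * mul_inv_cancel₀ hz0
  linear_combination h_deriv + f z * h_kernel -
    z * f z⁻¹ * dunklKernel_zero_add_inv (α := α) (β := β) hz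

end Reflections

section Eigenfunctions

variable {α β : ℝ} {N : ℕ} {f g : ℂ → ℂ} {μ ν : ℂ}

lemma Lop_congr (h : Set.EqOn f g (regularDomain N)) :
    Set.EqOn (Lop α β N f) (Lop α β N g) (regularDomain N) := by
  intro z hz
  have hderiv : deriv f z = deriv g z :=
    (h.eventuallyEq_of_mem ((isOpen_regularDomain N).mem_nhds hz)).deriv_eq
  have hq := qN_pow_pow_self (ne_zero_of_mem_regularDomain hz)
  simp only [Lop, hderiv, h hz, h (div_mem_regularDomain hz (hq _))]

lemma Lop_linear_combination {z : ℂ} (hf : DifferentiableAt ℂ f z) (hg : DifferentiableAt ℂ g z)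
    (x y : ℂ) :
    Lop α β N (fun w => x * f w + y * g w) z = x * Lop α β N f z + y * Lop α β N g z := by
  have hderiv : deriv (fun w => x * f w + y * g w) z = x * deriv f z + y * deriv g z :=
    ((hf.hasDerivAt.const_mul x).add (hg.hasDerivAt.const_mul y)).deriv
  have hsum : ∑ k ∈ range N, Acoef α β N k z *
        (x * f (qN N ^ k / z) + y * g (qN N ^ k / z) - (x * f z + y * g z)) =
      x * ∑ k ∈ range N, Acoef α β N k z * (f (qN N ^ k / z) - f z) +
        y * ∑ k ∈ range N, Acoef α β N k z * (g (qN N ^ k / z) - g z) := by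
    rw [mul_sum, mul_sum, ← sum_add_distrib]
    exact sum_congr rfl fun k _ => by ring
  simp only [Lop]
  rw [hderiv, hsum]
  ring

/-- `f` is a differentiable eigenfunction of `L` with eigenvalue `μ`, away from the poles of the
coefficients. -/
structure IsDunklEigenfunction (α β : ℝ) (N : ℕ) (μ : ℂ) (f : ℂ → ℂ) : Prop where
  differentiableAt : ∀ z ∈ regularDomain N, DifferentiableAt ℂ f z
  Lop_eq : ∀ z ∈ regularDomain N, Lop α β N f z = μ * f z

namespace IsDunklEigenfunction

lemma congr (hf : IsDunklEigenfunction α β N μ f) (h : Set.EqOn g f (regularDomain N)) :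
    IsDunklEigenfunction α β N μ g where
  differentiableAt z hz := (hf.differentiableAt z hz).congr_of_eventuallyEq
    (h.eventuallyEq_of_mem ((isOpen_regularDomain N).mem_nhds hz))
  Lop_eq z hz := by rw [Lop_congr h hz, hf.Lop_eq z hz, h hz]

/-- The condition on `c` makes the terms proportional to `f` in `L (f(1/z) - c f)` cancel. -/
theorem comp_inv_sub {e : ℤ} {c : ℂ} (hf : IsDunklEigenfunction α β N μ f)
    (hfe : RotationCovariant N e f)
    (hc : c * (N * (α + β + 1) - 2 * μ) = weightedPowerSum α β N (2 * e)) :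
    IsDunklEigenfunction α β N (N * (α + β + 1) - μ) fun w => 1 * f w⁻¹ + -c * f w := by
  have hd (z) (hz : z ∈ regularDomain N) : DifferentiableAt ℂ (fun w => f w⁻¹) z :=
    (hasDerivAt_comp_inv hz.1
      (hf.differentiableAt _ (inv_mem_regularDomain hz))).differentiableAt
  refine ⟨fun z hz => ((hd z hz).const_mul 1).add ((hf.differentiableAt z hz).const_mul (-c)),
    fun z hz => ?_⟩
  have hz' := inv_mem_regularDomain hz
  have h := Lop_comp_inv (α := α) (β := β) hfe hz (hf.differentiableAt _ hz')
  rw [hf.Lop_eq _ hz'] at h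
  rw [Lop_linear_combination (hd z hz) (hf.differentiableAt z hz), hf.Lop_eq z hz]
  linear_combination h + f z * hc

theorem mul_comp_inv_sub {e : ℤ} {c : ℂ} (hf : IsDunklEigenfunction α β N μ f)
    (hfe : RotationCovariant N e f)
    (hc : c * (1 + N * (α + β + 1) - 2 * μ) = -weightedPowerSum α β N (1 - 2 * e)) :
    IsDunklEigenfunction α β N (1 + N * (α + β + 1) - μ)
      fun w => 1 * (w * f w⁻¹) + -c * f w := by
  have hd (z) (hz : z ∈ regularDomain N) : DifferentiableAt ℂ (fun w => w * f w⁻¹) z :=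
    differentiableAt_id.mul (hasDerivAt_comp_inv hz.1
      (hf.differentiableAt _ (inv_mem_regularDomain hz))).differentiableAt
  refine ⟨fun z hz => ((hd z hz).const_mul 1).add ((hf.differentiableAt z hz).const_mul (-c)),
    fun z hz => ?_⟩
  have hz' := inv_mem_regularDomain hz
  have h := Lop_mul_comp_inv (α := α) (β := β) hfe hz (hf.differentiableAt _ hz')
  rw [hf.Lop_eq _ hz'] at h
  rw [Lop_linear_combination (hd z hz) (hf.differentiableAt z hz), hf.Lop_eq z hz]
  linear_combination h + f z * hc

theorem Lop_Lop_sub (hf : IsDunklEigenfunction α β N μ f) (hg : IsDunklEigenfunction α β N ν g)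
    (x y : ℂ) {z : ℂ} (hz : z ∈ regularDomain N) :
    Lop α β N (Lop α β N fun w => x * f w + y * g w) z -
        (μ + ν) * Lop α β N (fun w => x * f w + y * g w) z =
      -(μ * ν) * (x * f z + y * g z) := by
  have hL (x y : ℂ) : Set.EqOn (Lop α β N fun w => x * f w + y * g w)
      (fun w => x * μ * f w + y * ν * g w) (regularDomain N) := by
    intro w hw
    rw [Lop_linear_combination (hf.differentiableAt w hw) (hg.differentiableAt w hw),
      hf.Lop_eq w hw, hg.Lop_eq w hw]
    ring
  rw [Lop_congr (hL x y) hz, hL _ _ hz, hL _ _ hz]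
  ring

end IsDunklEigenfunction

end Eigenfunctions

section CMV

lemma psi_zero (c : ℕ → ℝ) : psi c 0 = fun _ => 1 := by
  funext z
  simp [psi, Phi]

lemma psi_two_mul (c : ℕ → ℝ) (p : ℕ) (z : ℂ) : psi c (2 * p) z = z ^ p * Phi c (2 * p) z⁻¹ := by
  rw [psi, if_pos (even_two_mul p), Nat.mul_div_cancel_left p two_pos]

lemma psi_two_mul_add_one (c : ℕ → ℝ) (p : ℕ) (z : ℂ) :
    psi c (2 * p + 1) z = (z ^ p)⁻¹ * Phi c (2 * p + 1) z := by
  rw [psi, if_neg (Nat.not_even_two_mul_add_one p), show (2 * p + 1) / 2 = p by omega, zpow_neg,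
    zpow_natCast]

lemma psi_two_mul_add_one_rec (c : ℕ → ℝ) (p : ℕ) {z : ℂ} (hz : z ≠ 0) :
    psi c (2 * p + 1) z = z * psi c (2 * p) z⁻¹ - c (2 * p) * psi c (2 * p) z := by
  rw [psi_two_mul_add_one, psi_two_mul, psi_two_mul, Phi, inv_inv, inv_pow, pow_mul']
  field_simp

lemma psi_two_mul_add_two_rec (c : ℕ → ℝ) (p : ℕ) {z : ℂ} (hz : z ≠ 0) :
    psi c (2 * (p + 1)) z =
      psi c (2 * p + 1) z⁻¹ - c (2 * p + 1) * psi c (2 * p + 1) z := by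
  rw [psi_two_mul, psi_two_mul_add_one, psi_two_mul_add_one, mul_add_one, Phi, inv_inv, inv_pow,
    inv_pow, inv_inv]
  field_simp
  ring

lemma Phi_root_mul {c : ℕ → ℝ} {ζ : ℂ} (hζ : ζ ≠ 0) (hc : ∀ n, c n ≠ 0 → ζ ^ (n + 1) = 1)
    (n : ℕ) (z : ℂ) : Phi c n (ζ * z) = ζ ^ n * Phi c n z := by
  induction n generalizing z with
  | zero => simp [Phi]
  | succ n ih =>
    have h_inv : ζ ^ n * Phi c n (ζ * z)⁻¹ = Phi c n z⁻¹ := by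
      rw [← ih, mul_inv, mul_inv_cancel_left₀ hζ]
    have h_root : (c n : ℂ) * ζ ^ (n + 1) = c n := by
      by_cases hn : c n = 0
      · simp [hn]
      · rw [hc n hn, mul_one]
    rw [Phi, Phi, ih, mul_pow]
    linear_combination -(c n * z ^ n) * h_inv + z ^ n * Phi c n z⁻¹ * h_root

variable {α β : ℝ} {N : ℕ}

lemma Phi_sievedA_root_mul (hN : N ≠ 0) {ζ : ℂ} (hζ : ζ ^ N = 1) (n : ℕ) (z : ℂ) :
    Phi (sievedA α β N) n (ζ * z) = ζ ^ n * Phi (sievedA α β N) n z := by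
  refine Phi_root_mul (IsUnit.of_pow_eq_one hζ hN).ne_zero (fun m hm => ?_) n z
  obtain ⟨k, hk⟩ : N ∣ m + 1 := by_contra fun h => hm (sievedA_of_not_dvd h)
  rw [hk, pow_mul, hζ, one_pow]

lemma rotationCovariant_psi_two_mul (hN : N ≠ 0) (p : ℕ) :
    RotationCovariant N (-p) (psi (sievedA α β N) (2 * p)) := by
  intro ζ hζ z
  have hζ0 : ζ ^ p ≠ 0 := pow_ne_zero p (IsUnit.of_pow_eq_one hζ hN).ne_zero
  rw [psi_two_mul, psi_two_mul, mul_inv, Phi_sievedA_root_mul hN (by rw [inv_pow, hζ, inv_one]),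
    zpow_neg, zpow_natCast, mul_pow, inv_pow, two_mul, pow_add, mul_inv]
  linear_combination (z ^ p * (ζ ^ p)⁻¹ * Phi (sievedA α β N) (p + p) z⁻¹) * mul_inv_cancel₀ hζ0

lemma rotationCovariant_psi_two_mul_add_one (hN : N ≠ 0) (p : ℕ) :
    RotationCovariant N (p + 1) (psi (sievedA α β N) (2 * p + 1)) := by
  intro ζ hζ z
  have hζ0 := (IsUnit.of_pow_eq_one hζ hN).ne_zero
  have hζp : ζ ^ p ≠ 0 := pow_ne_zero p hζ0
  rw [psi_two_mul_add_one, psi_two_mul_add_one, Phi_sievedA_root_mul hN hζ, zpow_add_one₀ hζ0,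
    zpow_natCast, mul_pow, mul_inv, pow_succ ζ, two_mul, pow_add]
  linear_combination (ζ ^ p * ζ * (z ^ p)⁻¹ * Phi (sievedA α β N) (p + p + 1) z) *
    mul_inv_cancel₀ hζp

end CMV

section JacobiEigenfunctions

variable {α β : ℝ} {N : ℕ}

theorem isDunklEigenfunction_psi_odd_of_even (hN : N ≠ 0)
    (hαβ : ∀ k : ℕ, (k : ℝ) + α + β + 2 ≠ 0) {p : ℕ}
    (h : IsDunklEigenfunction α β N (-p) (psi (sievedA α β N) (2 * p))) :
    IsDunklEigenfunction α β N (p + 1 + N * (α + β + 1)) (psi (sievedA α β N) (2 * p + 1)) := by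
  have hc := sievedA_mul hN hαβ (2 * p)
  push_cast at hc
  have h_step := h.mul_comp_inv_sub (rotationCovariant_psi_two_mul hN p)
    (c := sievedA α β N (2 * p)) (by
      rw [show (1 - 2 * -(p : ℤ)) = 2 * p + 1 by ring, ← hc]
      ring)
  convert h_step.congr fun z hz => ?_ using 1
  · ring
  · rw [psi_two_mul_add_one_rec _ _ hz.1]
    ring

theorem isDunklEigenfunction_psi_even_of_odd (hN : N ≠ 0)
    (hαβ : ∀ k : ℕ, (k : ℝ) + α + β + 2 ≠ 0) {p : ℕ}
    (h : IsDunklEigenfunction α β N (p + 1 + N * (α + β + 1)) (psi (sievedA α β N) (2 * p + 1))) :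
    IsDunklEigenfunction α β N (-(p + 1 : ℕ)) (psi (sievedA α β N) (2 * (p + 1))) := by
  have hc := sievedA_mul hN hαβ (2 * p + 1)
  push_cast at hc
  have h_step := h.comp_inv_sub (rotationCovariant_psi_two_mul_add_one hN p)
    (c := sievedA α β N (2 * p + 1)) (by
      rw [show 2 * ((p : ℤ) + 1) = 2 * p + 1 + 1 by ring]
      linear_combination -hc)
  convert h_step.congr fun z hz => ?_ using 1
  · push_cast
    ring
  · rw [psi_two_mul_add_two_rec _ _ hz.1]
    ring

theorem isDunklEigenfunction_psi_even (hN : N ≠ 0) (hαβ : ∀ k : ℕ, (k : ℝ) + α + β + 2 ≠ 0)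
    (p : ℕ) : IsDunklEigenfunction α β N (-p) (psi (sievedA α β N) (2 * p)) := by
  induction p with
  | zero =>
    rw [mul_zero, psi_zero]
    exact ⟨fun z _ => differentiableAt_const 1, fun z _ => by simp [Lop]⟩
  | succ p ih =>
    exact isDunklEigenfunction_psi_even_of_odd hN hαβ
      (isDunklEigenfunction_psi_odd_of_even hN hαβ ih)

theorem isDunklEigenfunction_psi_odd (hN : N ≠ 0) (hαβ : ∀ k : ℕ, (k : ℝ) + α + β + 2 ≠ 0)
    (p : ℕ) :
    IsDunklEigenfunction α β N (p + 1 + N * (α + β + 1)) (psi (sievedA α β N) (2 * p + 1)) :=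
  isDunklEigenfunction_psi_odd_of_even hN hαβ (isDunklEigenfunction_psi_even hN hαβ p)

end JacobiEigenfunctions

theorem stmt_14_general (α β : ℝ) (hαβ : ∀ k : ℕ, (k : ℝ) + α + β + 2 ≠ 0) (N : ℕ)
    (n : ℕ) (hn : 1 ≤ n) (z : ℂ) (hz : z ≠ 0) (hz2 : z ^ (2 * N) ≠ 1) :
    Lop α β N (Lop α β N (sievP α β N n)) z
      - (N : ℂ) * ((α : ℂ) + β + 1) * Lop α β N (sievP α β N n) z
      = (n : ℂ) * ((n : ℂ) + (N : ℂ) * ((α : ℂ) + β + 1)) * sievP α β N n z := by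
  obtain ⟨p, rfl⟩ := Nat.exists_eq_add_of_le' hn
  have hzN : z ∈ regularDomain N := ⟨hz, hz2⟩
  have hN := ne_zero_of_mem_regularDomain hzN
  have hP : sievP α β N (p + 1) = fun w => 1 * psi (sievedA α β N) (2 * (p + 1)) w +
      (1 + sievedA α β N (2 * p + 1)) * psi (sievedA α β N) (2 * p + 1) w := by
    funext w
    rw [sievP, show 2 * (p + 1) - 1 = 2 * p + 1 by omega, one_mul]
  have h_quadratic := (isDunklEigenfunction_psi_even hN hαβ (p + 1)).Lop_Lop_sub
    (isDunklEigenfunction_psi_odd hN hαβ p) 1 (1 + sievedA α β N (2 * p + 1)) hzN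
  rw [hP]
  push_cast at h_quadratic ⊢
  linear_combination h_quadratic

/-- the sieved Jacobi polynomial of the first kind
𝒫_n(z) = ψ_{2n}(z;N) + (1 + a_{2n-1}(N)) ψ_{2n-1}(z;N) satisfies
(L(N)² - N(α+β+1)L(N)) 𝒫_n = n(n + N(α+β+1)) 𝒫_n. -/
theorem stmt_14 (α β : ℝ) (hα : -1 < α) (hβ : -1 < β) (N : ℕ) (hN : 1 ≤ N)
    (n : ℕ) (hn : 1 ≤ n) (z : ℂ) (hz : z ≠ 0) (hz2 : z ^ (2 * N) ≠ 1) :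
    Lop α β N (Lop α β N (sievP α β N n)) z
      - (N : ℂ) * ((α : ℂ) + β + 1) * Lop α β N (sievP α β N n) z
      = (n : ℂ) * ((n : ℂ) + (N : ℂ) * ((α : ℂ) + β + 1)) * sievP α β N n z := by
  refine stmt_14_general α β (fun k => ?_) N n hn z hz hz2
  linarith [(Nat.cast_nonneg k : (0 : ℝ) ≤ k)]
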